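/- $\sum_{n=1}^{\infty} \frac{(4n-1)(-64)^n}{n^3 \binom{2n}{n}^3}\left(H_{2n-1}^{(2)} - \frac{1}{2} H_{n-1}^{(2)}\right) = -16\,\beta(4)$. -/

import Mathlib

open Filter Topology

/-- Generalized harmonic number `H_n^{(s)} = ∑_{k=1}^n 1/k^s`. -/
noncomputable def H (s n : ℕ) : ℝ := ∑ k ∈ Finset.range n, 1 / ((k:ℝ) + 1) ^ s

/-- The Dirichlet beta function `β(s) = ∑_{k ≥ 0} (-1)^k/(2k+1)^s`. -/
noncomputable def dirichletBeta (s : ℕ) : ℝ := ∑' k : ℕ, (-1:ℝ)^k / (2*(k:ℝ)+1)^s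

/-!
For every parameter `t`, the products
`P(x, n) = B(x, n + 1) ∏_{j=1}^n (j² - t) / ∏_{j=0}^n ((x + j)² - t)`
satisfy the Wilf–Zeilberger relation
`(2n + x + 1) P(x, n) + (2n + x + 2) P(x + 1, n) = (2x + n) P(x, n) + (2x + n + 1) P(x, n + 1)`.
Comparing coefficients of `t` gives the same relation for
`B(x, n + 1)³ (∑_{j=0}^n 1 / (x + j)² - H_n^{(2)})`, which is where the harmonic numbers come from.
With alternating signs the relation telescopes in both directions. Since
`B(x, n + 1) ~ Γ(x) n^{-x}`, the boundary terms vanish for `x > 1/3`, and the series over `n`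
becomes `2 ∑_k (-1)^k / (x + k)⁴`. At `x = 1/2` the Beta values are expressed by central binomial
coefficients and the right-hand side is `32 β(4)`.
-/

open Finset
open scoped Nat

/-- A Wilf–Zeilberger pair: two double sequences whose differences in complementary directions
agree, so that sums of `F` over the first index can be traded for sums of `G` over the second. -/
def IsWZPair {E : Type*} [AddCommGroup E] (F G : ℕ → ℕ → E) : Prop :=
  ∀ n k, F n (k + 1) - F n k = G (n + 1) k - G n k

namespace IsWZPair

theorem sum_range_sub_sum_range {E : Type*} [AddCommGroup E] {F G : ℕ → ℕ → E}
    (h : IsWZPair F G) (N K : ℕ) :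
    ∑ n ∈ range N, F n K - ∑ n ∈ range N, F n 0 =
      ∑ k ∈ range K, G N k - ∑ k ∈ range K, G 0 k := by
  calc ∑ n ∈ range N, F n K - ∑ n ∈ range N, F n 0
      = ∑ n ∈ range N, ∑ k ∈ range K, (F n (k + 1) - F n k) := by
        simp only [sum_range_sub, ← sum_sub_distrib]
    _ = ∑ k ∈ range K, ∑ n ∈ range N, (G (n + 1) k - G n k) := by
        rw [sum_comm]
        simp only [h _ _]
    _ = ∑ k ∈ range K, G N k - ∑ k ∈ range K, G 0 k := by
        rw [← sum_sub_distrib]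
        exact sum_congr rfl fun k _ => sum_range_sub (G · k) N

variable {E : Type*} [NormedAddCommGroup E] {F G : ℕ → ℕ → E}

theorem sum_range_eq_tsum_sub_tsum (h : IsWZPair F G) (hF : ∀ n, Tendsto (F n) atTop (𝓝 0))
    (hG : ∀ n, Summable (G n)) (N : ℕ) :
    ∑ n ∈ range N, F n 0 = ∑' k, G 0 k - ∑' k, G N k := by
  have hFK : Tendsto (fun K => ∑ n ∈ range N, F n 0 - ∑ n ∈ range N, F n K) atTop
      (𝓝 (∑ n ∈ range N, F n 0)) := by
    simpa using (tendsto_finsetSum (range N) fun n _ => hF n).const_sub (∑ n ∈ range N, F n 0)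
  refine tendsto_nhds_unique hFK <|
    ((hG 0).hasSum.tendsto_sum_nat.sub (hG N).hasSum.tendsto_sum_nat).congr fun K => ?_
  rw [← neg_sub, ← h.sum_range_sub_sum_range, neg_sub]

theorem tendsto_sum_range [CompleteSpace E] (h : IsWZPair F G)
    (hF : ∀ n, Tendsto (F n) atTop (𝓝 0)) {b c : ℕ → ℝ} (hb : Summable b)
    (hc : Tendsto c atTop (𝓝 0)) (hG : ∀ n k, ‖G n k‖ ≤ c n * b k) :
    Tendsto (fun N => ∑ n ∈ range N, F n 0) atTop (𝓝 (∑' k, G 0 k)) := by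
  have hsum n : Summable (G n) := .of_norm_bounded (hb.mul_left (c n)) (hG n)
  have htail : Tendsto (fun N => ∑' k, G N k) atTop (𝓝 0) :=
    squeeze_zero_norm (fun N => tsum_of_norm_bounded (hb.hasSum.mul_left (c N)) (hG N))
      (by simpa using hc.mul_const (∑' k, b k))
  simpa only [h.sum_range_eq_tsum_sub_tsum hF hsum, sub_zero] using htail.const_sub (∑' k, G 0 k)

end IsWZPair

/-- The Beta value `B(x, n + 1) = n! / (x (x + 1) ⋯ (x + n))`. -/
noncomputable def eulerBeta (x : ℝ) (n : ℕ) : ℝ := n ! / ∏ j ∈ range (n + 1), (x + j)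

namespace eulerBeta

variable {x y : ℝ}

theorem nonneg (hx : 0 < x) (n : ℕ) : 0 ≤ eulerBeta x n := by
  unfold eulerBeta
  positivity

theorem succ_right (x : ℝ) (n : ℕ) :
    eulerBeta x (n + 1) = eulerBeta x n * ((n + 1) / (x + n + 1)) := by
  rw [eulerBeta, prod_range_succ, Nat.factorial_succ, eulerBeta, ← mul_div_mul_comm]
  push_cast
  ring_nf

theorem add_one_left (hx : x ≠ 0) (n : ℕ) :
    eulerBeta (x + 1) n = eulerBeta x n * (x / (x + n + 1)) := by
  have hprod : (∏ j ∈ range (n + 1), (x + j)) * (x + n + 1) =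
      (∏ j ∈ range (n + 1), (x + 1 + j)) * x := by
    have := (prod_range_succ (fun j : ℕ => x + j) (n + 1)).symm.trans (prod_range_succ' _ _)
    simpa [add_assoc, add_comm, add_left_comm] using this
  rw [eulerBeta, eulerBeta, ← mul_div_mul_comm, hprod, mul_div_mul_right _ _ hx]

theorem self_mul (hx : x ≠ 0) (n : ℕ) :
    x * eulerBeta x n = n ! / ∏ j ∈ range n, (x + (j + 1)) := by
  rw [eulerBeta, prod_range_succ']
  simp only [Nat.cast_zero, add_zero, Nat.cast_add, Nat.cast_one]
  rw [mul_comm x, div_mul_eq_mul_div, mul_div_mul_right _ _ hx]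

theorem self_mul_le_self_mul (hx : 0 < x) (hxy : x ≤ y) (n : ℕ) :
    y * eulerBeta y n ≤ x * eulerBeta x n := by
  rw [self_mul hx.ne', self_mul (hx.trans_le hxy).ne']
  gcongr

/-- Euler's limit `n^x B(x, n + 1) → Γ(x)` makes this quantity decay like `n^{1 - 3x}`. -/
theorem tendsto_add_natCast_mul_cube (hx : 1 / 3 < x) (a : ℝ) :
    Tendsto (fun n : ℕ => (a + n) * eulerBeta x n ^ 3) atTop (𝓝 0) := by
  have hneg {r : ℝ} (hr : 0 < r) : Tendsto (fun n : ℕ => (n : ℝ) ^ (-r)) atTop (𝓝 0) :=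
    (tendsto_rpow_neg_atTop hr).comp tendsto_natCast_atTop_atTop
  have hdecay : Tendsto (fun n : ℕ => a * (n : ℝ) ^ (-(3 * x)) + (n : ℝ) ^ (-(3 * x - 1)))
      atTop (𝓝 0) := by
    simpa using ((hneg (r := 3 * x) (by linarith)).const_mul a).add
      (hneg (r := 3 * x - 1) (by linarith))
  have hlim := hdecay.mul ((Real.GammaSeq_tendsto_Gamma x).pow 3)
  rw [zero_mul] at hlim
  refine hlim.congr' ?_
  filter_upwards [eventually_gt_atTop 0] with n hn
  have hn : (0 : ℝ) < n := mod_cast hn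
  have hcube : (n : ℝ) ^ (3 * x) = ((n : ℝ) ^ x) ^ 3 := by
    rw [mul_comm, Real.rpow_mul hn.le]
    norm_cast
  rw [Real.GammaSeq, eulerBeta, neg_sub, Real.rpow_sub hn, Real.rpow_neg hn.le, Real.rpow_one,
    hcube]
  have : (n : ℝ) ^ x ≠ 0 := (Real.rpow_pos_of_pos hn x).ne'
  field_simp

theorem one_half (n : ℕ) :
    eulerBeta (1 / 2) n = 4 ^ (n + 1) / ((n + 1) * (n + 1).centralBinom) := by
  induction n with
  | zero => norm_num [eulerBeta, Nat.centralBinom, Nat.choose]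
  | succ n ih =>
    have hrec : ((n : ℝ) + 1 + 1) * (n + 1 + 1).centralBinom =
        2 * (2 * (n + 1) + 1) * (n + 1).centralBinom :=
      mod_cast Nat.succ_mul_centralBinom_succ (n + 1)
    have : ((n + 1).centralBinom : ℝ) ≠ 0 := mod_cast (n + 1).centralBinom_ne_zero
    rw [succ_right, ih]
    push_cast
    rw [hrec]
    field_simp
    ring

end eulerBeta

theorem summable_one_div_add_sq {x : ℝ} (hx : 0 < x) :
    Summable fun k : ℕ => 1 / (x + k) ^ 2 := by
  refine ((Real.summable_one_div_nat_add_rpow x 2).2 one_lt_two).congr fun k => ?_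
  rw [abs_of_pos (by positivity), add_comm]
  norm_cast

theorem sum_one_div_add_sq_le_tsum {x y : ℝ} (hx : 0 < x) (hxy : x ≤ y) (n : ℕ) :
    ∑ j ∈ range n, 1 / (y + j) ^ 2 ≤ ∑' j : ℕ, 1 / (x + j) ^ 2 :=
  calc ∑ j ∈ range n, 1 / (y + j) ^ 2
      ≤ ∑ j ∈ range n, 1 / (x + j) ^ 2 := by gcongr
    _ ≤ ∑' j : ℕ, 1 / (x + j) ^ 2 :=
      (summable_one_div_add_sq hx).sum_le_tsum _ fun j _ => by positivity

theorem sum_range_two_mul_add_one {M : Type*} [AddCommMonoid M] (f : ℕ → M) (n : ℕ) :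
    ∑ i ∈ range (2 * n + 1), f i =
      ∑ j ∈ range (n + 1), f (2 * j) + ∑ j ∈ range n, f (2 * j + 1) := by
  induction n with
  | zero => simp
  | succ n ih =>
    rw [Nat.mul_succ, sum_range_succ, sum_range_succ, ih, sum_range_succ _ (n + 1),
      sum_range_succ (fun j => f (2 * j + 1)) n, Nat.mul_succ]
    abel

theorem sum_one_div_half_add_pow (s n : ℕ) :
    ∑ j ∈ range (n + 1), 1 / ((1 / 2 : ℝ) + j) ^ s = 2 ^ s * H s (2 * n + 1) - H s n := by
  have hdouble (t : ℝ) : 2 ^ s * (1 / (2 * t) ^ s) = 1 / t ^ s := by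
    rw [mul_pow, mul_one_div, div_mul_cancel_left₀ (by positivity), one_div]
  have heven (j : ℕ) : ((2 * j : ℕ) : ℝ) + 1 = 2 * (1 / 2 + j) := by push_cast; ring
  have hodd (j : ℕ) : ((2 * j + 1 : ℕ) : ℝ) + 1 = 2 * (j + 1) := by push_cast; ring
  simp only [H, sum_range_two_mul_add_one, heven, hodd, mul_add (2 ^ s : ℝ), mul_sum, hdouble,
    add_sub_cancel_right]

/-- The difference `∑_{j=0}^n 1 / (x + j)² - H_n^{(2)}`, the harmonic factor of the
Wilf–Zeilberger pair. -/
noncomputable def harmonicGap (x : ℝ) (n : ℕ) : ℝ :=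
  ∑ j ∈ range (n + 1), 1 / (x + j) ^ 2 - H 2 n

namespace harmonicGap

theorem succ_right (x : ℝ) (n : ℕ) :
    harmonicGap x (n + 1) = harmonicGap x n + 1 / (x + n + 1) ^ 2 - 1 / ((n : ℝ) + 1) ^ 2 := by
  simp only [harmonicGap, H, sum_range_succ _ (n + 1), sum_range_succ _ n]
  push_cast
  ring

theorem add_one_left (x : ℝ) (n : ℕ) :
    harmonicGap (x + 1) n = harmonicGap x n + 1 / (x + n + 1) ^ 2 - 1 / x ^ 2 := by
  have hsum := (sum_range_succ (fun j : ℕ => 1 / (x + j) ^ 2) (n + 1)).symm.trans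
    (sum_range_succ' _ _)
  have hshift : ∀ j : ℕ, x + 1 + j = x + (j + 1 : ℕ) := fun j => by push_cast; ring
  simp only [harmonicGap, hshift]
  push_cast at hsum ⊢
  rw [add_zero, ← add_assoc] at hsum
  linarith

theorem exists_abs_le {x : ℝ} (hx : 0 < x) : ∃ C, ∀ y, x ≤ y → ∀ n, |harmonicGap y n| ≤ C := by
  refine ⟨max (∑' j : ℕ, 1 / (x + j) ^ 2) (∑' j : ℕ, 1 / (1 + j : ℝ) ^ 2), fun y hxy n => ?_⟩
  have hH : H 2 n ≤ ∑' j : ℕ, 1 / (1 + j : ℝ) ^ 2 := by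
    simpa only [H, add_comm] using sum_one_div_add_sq_le_tsum one_pos le_rfl n
  have hH₀ : 0 ≤ H 2 n := sum_nonneg fun j _ => by positivity
  have hy₀ : 0 ≤ ∑ j ∈ range (n + 1), 1 / (y + j) ^ 2 := sum_nonneg fun j _ => by positivity
  exact abs_sub_le_of_nonneg_of_le hy₀
    (le_max_of_le_left (sum_one_div_add_sq_le_tsum hx hxy _)) hH₀ (le_max_of_le_right hH)

theorem one_half (n : ℕ) :
    harmonicGap (1 / 2) n = 4 * (H 2 (2 * n + 1) - 1 / 2 * H 2 n) := by
  rw [harmonicGap, sum_one_div_half_add_pow]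
  ring

end harmonicGap

/-- The term `(a x + b) B(x, n + 1)³ (∑_{j=0}^n 1 / (x + j)² - H_n^{(2)})`; both members of the
Wilf–Zeilberger pair are of this form, up to sign. -/
noncomputable def betaCubeTerm (a b x : ℝ) (n : ℕ) : ℝ :=
  (a * x + b) * eulerBeta x n ^ 3 * harmonicGap x n

namespace betaCubeTerm

variable {x : ℝ}

theorem two_zero_apply_zero (hx : x ≠ 0) : betaCubeTerm 2 0 x 0 = 2 / x ^ 4 := by
  simp only [betaCubeTerm, eulerBeta, harmonicGap, H, zero_add, range_one, sum_singleton,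
    prod_singleton, range_zero, sum_empty, Nat.factorial_zero, Nat.cast_zero, Nat.cast_one,
    add_zero, sub_zero]
  field_simp

theorem wz_relation (hx : 0 < x) (n : ℕ) :
    betaCubeTerm 1 (2 * n + 1) x n + betaCubeTerm 1 (2 * n + 1) (x + 1) n =
      betaCubeTerm 2 n x n + betaCubeTerm 2 (n + 1 : ℕ) x (n + 1) := by
  simp only [betaCubeTerm, eulerBeta.succ_right, eulerBeta.add_one_left hx.ne',
    harmonicGap.succ_right, harmonicGap.add_one_left]
  push_cast
  field_simp
  ring

theorem isWZPair (hx : 0 < x) :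
    IsWZPair (fun n k => (-1) ^ (n + k) * betaCubeTerm 1 (2 * n + 1) (x + k) n)
      (fun n k => (-1) ^ (n + k) * betaCubeTerm 2 n (x + k) n) := by
  intro n k
  have hwz := wz_relation (x := x + k) (by positivity) n
  rw [add_assoc x] at hwz
  push_cast at hwz ⊢
  linear_combination (-(-1) ^ (n + k)) * hwz

theorem abs_le {a b y C : ℝ} (ha : 0 ≤ a) (hb : 0 ≤ b) (hx : 0 < x) (hxy : x ≤ y) {n : ℕ}
    (hC : |harmonicGap y n| ≤ C) :
    |betaCubeTerm a b y n| ≤ C * x ^ 2 * ((a * x + b) * eulerBeta x n ^ 3) * (1 / y ^ 2) := by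
  have hy : 0 < y := hx.trans_le hxy
  have hβ := eulerBeta.nonneg hx n
  have hβy := eulerBeta.nonneg hy n
  have hlin : x * (a * y + b) ≤ y * (a * x + b) := by nlinarith
  have hcube : (y * eulerBeta y n) ^ 3 ≤ (x * eulerBeta x n) ^ 3 :=
    pow_le_pow_left₀ (by positivity) (eulerBeta.self_mul_le_self_mul hx hxy n) 3
  calc |betaCubeTerm a b y n|
      = x * (a * y + b) * (y * eulerBeta y n) ^ 3 * |harmonicGap y n| / (x * y ^ 3) := by
        rw [betaCubeTerm, abs_mul, abs_of_nonneg (by positivity)]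
        field_simp
    _ ≤ y * (a * x + b) * (x * eulerBeta x n) ^ 3 * C / (x * y ^ 3) := by gcongr
    _ = C * x ^ 2 * ((a * x + b) * eulerBeta x n ^ 3) * (1 / y ^ 2) := by field_simp

theorem tendsto_sum_alternating (hx : 1 / 3 < x) :
    Tendsto (fun N => ∑ n ∈ range N, (-1) ^ n * betaCubeTerm 1 (2 * n + 1) x n) atTop
      (𝓝 (2 * ∑' k : ℕ, (-1) ^ k / (x + k) ^ 4)) := by
  have hx₀ : 0 < x := by linarith
  obtain ⟨C, hC⟩ := harmonicGap.exists_abs_le hx₀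
  have hbound {a b : ℝ} (ha : 0 ≤ a) (hb : 0 ≤ b) (n k : ℕ) :
      ‖(-1) ^ (n + k) * betaCubeTerm a b (x + k) n‖ ≤
        C * x ^ 2 * ((a * x + b) * eulerBeta x n ^ 3) * (1 / (x + k) ^ 2) := by
    have hxk : x ≤ x + k := le_add_of_nonneg_right k.cast_nonneg
    simpa using abs_le ha hb hx₀ hxk (hC _ hxk n)
  have hsq := summable_one_div_add_sq hx₀
  have hF (n : ℕ) : Tendsto
      (fun k : ℕ => (-1) ^ (n + k) * betaCubeTerm 1 (2 * n + 1) (x + k) n) atTop (𝓝 0) :=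
    squeeze_zero_norm (hbound zero_le_one (by positivity) n)
      (by simpa using hsq.tendsto_atTop_zero.const_mul _)
  have hc : Tendsto (fun n : ℕ => C * x ^ 2 * ((2 * x + n) * eulerBeta x n ^ 3)) atTop (𝓝 0) := by
    simpa using (eulerBeta.tendsto_add_natCast_mul_cube hx (2 * x)).const_mul (C * x ^ 2)
  have hG₀ (k : ℕ) : (-1) ^ (0 + k) * betaCubeTerm 2 (0 : ℕ) (x + k) 0 =
      2 * ((-1) ^ k / (x + k) ^ 4) := by
    rw [zero_add, Nat.cast_zero, two_zero_apply_zero (by positivity), mul_div_left_comm]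
  have hlim := (isWZPair hx₀).tendsto_sum_range hF hsq hc
    fun n k => hbound zero_le_two n.cast_nonneg n k
  simp only [hG₀, tsum_mul_left] at hlim
  simpa only [Nat.cast_zero, add_zero] using hlim

end betaCubeTerm

theorem tsum_alternating_half_add_pow (s : ℕ) :
    ∑' k : ℕ, (-1) ^ k / ((1 / 2 : ℝ) + k) ^ s = 2 ^ s * dirichletBeta s := by
  rw [dirichletBeta, ← tsum_mul_left]
  refine tsum_congr fun k => ?_
  rw [show (1 / 2 : ℝ) + k = (2 * k + 1) / 2 by ring, div_pow, div_div_eq_mul_div]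
  ring

theorem summand_eq_betaCubeTerm (n : ℕ) :
    ((4 * ((n : ℝ) + 1) - 1) * (-64 : ℝ) ^ (n + 1)) /
          (((n : ℝ) + 1) ^ 3 * ((2 * (n + 1)).choose (n + 1) : ℝ) ^ 3) *
        (H 2 (2 * n + 1) - 1 / 2 * H 2 n) =
      -(1 / 2) * ((-1) ^ n * betaCubeTerm 1 (2 * n + 1) (1 / 2) n) := by
  have hpow : (-64 : ℝ) ^ (n + 1) = -((-1) ^ n * (4 ^ (n + 1)) ^ 3) := by
    rw [← pow_mul, mul_comm (n + 1), pow_mul, show (-64 : ℝ) = -1 * 4 ^ 3 by norm_num, mul_pow,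
      pow_succ (-1 : ℝ)]
    ring
  rw [betaCubeTerm, harmonicGap.one_half, eulerBeta.one_half, hpow,
    Nat.centralBinom_eq_two_mul_choose, div_pow, mul_pow]
  ring

theorem stmt_8 :
    Tendsto (fun N => ∑ n ∈ Finset.range N,
      ((4 * ((n:ℝ)+1) - 1) * (-64:ℝ)^(n+1)) /
          (((n:ℝ)+1)^3 * ((2*(n+1)).choose (n+1) : ℝ)^3) *
        (H 2 (2*n+1) - 1/2 * H 2 n))
      atTop (𝓝 (-16 * dirichletBeta 4)) := by
  simp only [summand_eq_betaCubeTerm, ← mul_sum]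
  have hhalf : (1 / 3 : ℝ) < 1 / 2 := by norm_num
  have hlim := (betaCubeTerm.tendsto_sum_alternating hhalf).const_mul (-(1 / 2))
  rw [tsum_alternating_half_add_pow] at hlim
  convert hlim using 2
  ring
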